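/- For every complex s with Re(s) > 1, ∑'_{(m,k)} 1/(m² + mk + 4k²)^s = ζ(s)·L(χ_{-15}, s) + L(χ_{-3}, s)·L(χ_5, s), where ζ is the Riemann zeta function. -/

import Mathlib

/-- The quadratic Dirichlet character modulo 3:
`χ₋₃(n) = 1` if `n ≡ 1 (mod 3)`, `-1` if `n ≡ 2 (mod 3)`, `0` if `3 ∣ n`. -/
def chiNeg3 (n : ℕ) : ℤ :=
  if n % 3 = 1 then 1 else if n % 3 = 2 then -1 else 0

/-- The quadratic Dirichlet character modulo 5 given by the Legendre symbol `(n/5)`. -/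
def chi5 (n : ℕ) : ℤ :=
  if n % 5 = 1 ∨ n % 5 = 4 then 1 else if n % 5 = 2 ∨ n % 5 = 3 then -1 else 0

/-- The quadratic Dirichlet character modulo 15, `χ₋₁₅(n) = (n/3)·(n/5)`. -/
def chiNeg15 (n : ℕ) : ℤ := chiNeg3 n * chi5 n

/-- The Dirichlet `L`-series `L(χ, s) = ∑_{n ≥ 1} χ(n) n^{-s}`. -/
noncomputable def LSer (χ : ℕ → ℤ) (s : ℂ) : ℂ :=
  ∑' n : ℕ, (χ (n + 1) : ℂ) / ((n : ℂ) + 1) ^ s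

/-!
The forms of discriminant `-15` fall into two classes, represented by `x² + xy + 4y²` and
`2x² + xy + 2y²`; each is alone in its genus, and the genus is read off modulo `3`. A vector on
which a form takes a value divisible by a prime `p` lies in `pℤ²` or in one of the sublattices of
index `p` given by the isotropic lines modulo `p`, `1 + χ₋₁₅(p)` in number. The form induced on
such a sublattice, divided by `p`, belongs to the original genus shifted by that of a prime ideal
over `p`. Inclusion-exclusion then expresses `r(pn)` for one form through `r(n)` for the shifted
form and `r(n / p)`, so the sum and the difference of the two representation numbers satisfy the
Hecke recursions of the convolutions `1 ⍟ χ₋₁₅` and `χ₋₃ ⍟ χ₅`. Such a recursion determines a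
sequence from its value at `1`.
-/

open Finset QuadraticMap
open scoped LSeries.notation NumberTheorySymbols

section HeckeRecursion

variable {R : Type*} [CommRing R] {a b f g F G : ℕ → R}

/-- The recursion satisfied by the coefficients of a Dirichlet series whose Euler factor at each
prime `p` is `1 / (1 - a p * X + b p * X ^ 2)` with `X = p ^ (-s)`, up to a constant multiple. -/
def HeckeRecursion (a b F : ℕ → R) : Prop :=
  ∀ p n : ℕ, p.Prime → n ≠ 0 →
    F (p * n) = a p * F n - b p * if p ∣ n then F (n / p) else 0

theorem HeckeRecursion.mul_apply_one_comm (hF : HeckeRecursion a b F)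
    (hG : HeckeRecursion a b G) {n : ℕ} (hn : n ≠ 0) : F n * G 1 = F 1 * G n := by
  induction n using Nat.strong_induction_on with
  | _ n ih =>
    rcases eq_or_ne n 1 with rfl | hn1
    · rfl
    obtain ⟨p, hp, m, rfl⟩ := Nat.exists_prime_and_dvd hn1
    have hm : m ≠ 0 := right_ne_zero_of_mul hn
    have hlt : m < p * m := lt_mul_of_one_lt_left (Nat.pos_of_ne_zero hm) hp.one_lt
    rw [hF p m hp hm, hG p m hp hm]
    split_ifs with hdvd
    · have hdiv : F (m / p) * G 1 = F 1 * G (m / p) :=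
        ih _ ((Nat.div_le_self m p).trans_lt hlt)
          (Nat.div_pos (Nat.le_of_dvd (Nat.pos_of_ne_zero hm) hdvd) hp.pos).ne'
      linear_combination a p * ih m hlt hm - b p * hdiv
    · linear_combination a p * ih m hlt hm

theorem sum_divisorsAntidiagonal_mul_filter_dvd {M : Type*} [AddCommMonoid M] {p : ℕ}
    (hp : p ≠ 0) (n : ℕ) (h : ℕ × ℕ → M) :
    ∑ x ∈ (p * n).divisorsAntidiagonal with p ∣ x.1, h x =
      ∑ x ∈ n.divisorsAntidiagonal, h (p * x.1, x.2) := by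
  symm
  refine sum_bij (fun x _ ↦ (p * x.1, x.2)) ?_ ?_ ?_ fun _ _ ↦ rfl
  · rintro ⟨d, e⟩ hx
    obtain ⟨rfl, hn⟩ := Nat.mem_divisorsAntidiagonal.1 hx
    simp [mul_assoc, hp, mul_ne_zero_iff.1 hn]
  · rintro ⟨d, e⟩ - ⟨d', e'⟩ - hx
    simpa [hp] using hx
  · rintro ⟨_, e⟩ hx
    obtain ⟨hx, d, rfl⟩ := mem_filter.1 hx
    obtain ⟨hde, hn⟩ := Nat.mem_divisorsAntidiagonal.1 hx
    refine ⟨(d, e), Nat.mem_divisorsAntidiagonal.2 ⟨?_, right_ne_zero_of_mul hn⟩, rfl⟩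
    exact mul_left_cancel₀ hp (by rw [← hde, mul_assoc])

theorem sum_divisorsAntidiagonal_mul_filter_not_dvd {M : Type*} [AddCommMonoid M] {p : ℕ}
    (hp : p.Prime) (n : ℕ) (h : ℕ × ℕ → M) :
    ∑ x ∈ (p * n).divisorsAntidiagonal with ¬p ∣ x.1, h x =
      ∑ x ∈ n.divisorsAntidiagonal with ¬p ∣ x.1, h (x.1, p * x.2) := by
  symm
  refine sum_bij (fun x _ ↦ (x.1, p * x.2)) ?_ ?_ ?_ fun _ _ ↦ rfl
  · rintro ⟨d, e⟩ hx
    obtain ⟨hx, hd⟩ := mem_filter.1 hx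
    obtain ⟨rfl, hn⟩ := Nat.mem_divisorsAntidiagonal.1 hx
    simp [hd, hp.ne_zero, mul_ne_zero_iff.1 hn, mul_left_comm]
  · rintro ⟨d, e⟩ - ⟨d', e'⟩ - hx
    simpa [hp.ne_zero] using hx
  · rintro ⟨d, e⟩ hx
    obtain ⟨hx, hd⟩ := mem_filter.1 hx
    obtain ⟨hde, hn⟩ := Nat.mem_divisorsAntidiagonal.1 hx
    obtain ⟨e, rfl⟩ := (hp.dvd_mul.1 (Dvd.intro n hde.symm)).resolve_left hd
    refine ⟨(d, e), mem_filter.2 ⟨Nat.mem_divisorsAntidiagonal.2 ⟨?_, right_ne_zero_of_mul hn⟩,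
      hd⟩, rfl⟩
    exact mul_left_cancel₀ hp.ne_zero (by rw [← hde, mul_left_comm])

theorem sum_divisorsAntidiagonal_filter_dvd_eq_mul_convolution
    (hf : ∀ m n, f (m * n) = f m * f n) {p : ℕ} (hp : p ≠ 0) (n : ℕ) :
    ∑ x ∈ n.divisorsAntidiagonal with p ∣ x.1, f x.1 * g x.2 =
      f p * if p ∣ n then (f ⍟ g) (n / p) else 0 := by
  split_ifs with hdvd
  · obtain ⟨m, rfl⟩ := hdvd
    rw [sum_divisorsAntidiagonal_mul_filter_dvd hp, Nat.mul_div_cancel_left _ (by omega),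
      LSeries.convolution_def, mul_sum]
    simp only [hf, mul_assoc]
  · rw [mul_zero, filter_eq_empty_iff.2, sum_empty]
    exact fun x hx hpx ↦ hdvd (hpx.trans ⟨x.2, (Nat.mem_divisorsAntidiagonal.1 hx).1.symm⟩)

theorem convolution_apply_one (f g : ℕ → R) : (f ⍟ g) 1 = f 1 * g 1 := by
  simp [LSeries.convolution_def]

theorem heckeRecursion_convolution (hf : ∀ m n, f (m * n) = f m * f n)
    (hg : ∀ m n, g (m * n) = g m * g n) :
    HeckeRecursion (fun p ↦ f p + g p) (fun p ↦ f p * g p) (f ⍟ g) := by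
  intro p n hp _
  have hdvd_n := sum_divisorsAntidiagonal_filter_dvd_eq_mul_convolution (g := g) hf hp.ne_zero n
  have hdvd_pn :=
    sum_divisorsAntidiagonal_filter_dvd_eq_mul_convolution (g := g) hf hp.ne_zero (p * n)
  have hsplit_n := sum_filter_add_sum_filter_not n.divisorsAntidiagonal (p ∣ ·.1)
    fun x ↦ f x.1 * g x.2
  have hsplit_pn := sum_filter_add_sum_filter_not (p * n).divisorsAntidiagonal (p ∣ ·.1)
    fun x ↦ f x.1 * g x.2
  rw [sum_divisorsAntidiagonal_mul_filter_not_dvd hp] at hsplit_pn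
  simp only [hg, mul_left_comm _ (g p), ← mul_sum] at hsplit_pn
  rw [if_pos (dvd_mul_right p n), Nat.mul_div_cancel_left _ hp.pos] at hdvd_pn
  have hconv (m : ℕ) : (f ⍟ g) m = ∑ x ∈ m.divisorsAntidiagonal, f x.1 * g x.2 := by
    rw [LSeries.convolution_def]
  rw [← hconv] at hsplit_n hsplit_pn
  linear_combination hdvd_pn - hsplit_pn + g p * hsplit_n - g p * hdvd_n

end HeckeRecursion

section RepresentationNumbers

variable {M N : Type*} [AddCommGroup M] [AddCommGroup N] {Q : QuadraticForm ℤ M}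
  {Q' : QuadraticForm ℤ N}

/-- The number of representations of `n` by the integral quadratic form `Q`
(with the value `0` when there are infinitely many). -/
noncomputable def repCount (Q : QuadraticForm ℤ M) (n : ℕ) : ℕ :=
  {v | Q v = n}.ncard

theorem repCount_eq_zero {n : ℕ} (h : ∀ v, Q v ≠ n) : repCount Q n = 0 := by
  simp [repCount, h]

theorem repCount_congr (h : Q.Equivalent Q') : repCount Q = repCount Q' := by
  obtain ⟨e⟩ := h
  ext n
  rw [repCount, repCount,
    ← Set.ncard_preimage_of_injective_subset_range e.injective (by simp)]
  simp [Set.preimage]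

theorem ncard_inter_range_eq_repCount {φ : N →ₗ[ℤ] M} (hφ : Function.Injective φ) {p : ℕ}
    (hp : p ≠ 0) (hQ : ∀ w, Q (φ w) = p * Q' w) (n : ℕ) :
    ({v | Q v = (p * n : ℕ)} ∩ Set.range φ).ncard = repCount Q' n := by
  rw [← Set.image_preimage_eq_inter_range, Set.ncard_image_of_injective _ hφ]
  simp [repCount, Set.preimage, hQ, hp]

theorem repCount_natCast_smul {p : ℕ} (hp : p ≠ 0) (n : ℕ) :
    repCount ((p : ℤ) • Q) n = if p ∣ n then repCount Q (n / p) else 0 := by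
  split_ifs with hdvd
  · obtain ⟨m, rfl⟩ := hdvd
    simp [repCount, hp, Nat.mul_div_cancel_left _ (Nat.pos_of_ne_zero hp)]
  · exact repCount_eq_zero fun v hv ↦ hdvd (Int.natCast_dvd_natCast.1 (Dvd.intro _ hv))

end RepresentationNumbers

section BinaryForms

variable {R : Type*} [CommRing R]

/-- The binary quadratic form `a x² + b x y + c y²`. -/
def binaryForm (a b c : R) : QuadraticForm R (R × R) :=
  a • linMulLin (.fst R R R) (.fst R R R) + b • linMulLin (.fst R R R) (.snd R R R) +
    c • linMulLin (.snd R R R) (.snd R R R)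

@[simp]
theorem binaryForm_apply (a b c : R) (v : R × R) :
    binaryForm a b c v = a * v.1 ^ 2 + b * (v.1 * v.2) + c * v.2 ^ 2 := by
  simp [binaryForm, pow_two]

theorem binaryForm_equivalent_swap (a b c : R) :
    (binaryForm a b c).Equivalent (binaryForm c b a) :=
  ⟨⟨LinearEquiv.prodComm R R R, fun v ↦ by simp; ring⟩⟩

theorem binaryForm_equivalent_neg (a b c : R) :
    (binaryForm a b c).Equivalent (binaryForm a (-b) c) :=
  ⟨⟨(LinearEquiv.refl R R).prodCongr (LinearEquiv.neg R), fun v ↦ by simp⟩⟩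

theorem binaryForm_equivalent_shear (a b c q : R) :
    (binaryForm a b c).Equivalent (binaryForm (a + b * q + c * q ^ 2) (b + 2 * c * q) c) :=
  ⟨⟨(LinearEquiv.refl R R).skewProd (LinearEquiv.refl R R) (-q • LinearMap.id), fun v ↦ by
    simp; ring⟩⟩

theorem four_mul_binaryForm (a b c : R) (v : R × R) :
    4 * a * binaryForm a b c v = (2 * a * v.1 + b * v.2) ^ 2 - discrim a b c * v.2 ^ 2 := by
  simp [discrim]; ring

theorem discrim_swap (a b c : R) : discrim c b a = discrim a b c := by
  rw [discrim, discrim, mul_right_comm]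

variable {a b c : ℤ}

theorem binaryForm_posDef (ha : 0 < a) (hD : discrim a b c < 0) : (binaryForm a b c).PosDef := by
  rintro ⟨x, y⟩ hv
  have h4 : 4 * a * binaryForm a b c (x, y) = _ := four_mul_binaryForm a b c (x, y)
  refine pos_of_mul_pos_right (a := 4 * a) (h4 ▸ ?_) (by positivity)
  rcases eq_or_ne y 0 with rfl | hy
  · have hx : x ≠ 0 := by rintro rfl; exact hv rfl
    have h2ax : 2 * a * x ≠ 0 := by positivity
    simpa only [mul_zero, add_zero, ne_eq, OfNat.ofNat_ne_zero, not_false_eq_true, zero_pow,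
      sub_zero] using sq_pos_of_ne_zero h2ax
  · have hy2 : 0 < y ^ 2 := by positivity
    linarith [sq_nonneg (2 * a * x + b * y), mul_pos (neg_pos.2 hD) hy2]

theorem abs_snd_le_four_mul_binaryForm (hD : discrim a b c < 0) (v : ℤ × ℤ) :
    |v.2| ≤ 4 * a * binaryForm a b c v := by
  have habs : |v.2| ≤ v.2 ^ 2 := by simpa using Int.natAbs_le_self_sq v.2
  have hmul : v.2 ^ 2 ≤ -discrim a b c * v.2 ^ 2 :=
    le_mul_of_one_le_left (sq_nonneg _) (by omega)
  linarith [four_mul_binaryForm a b c v, sq_nonneg (2 * a * v.1 + b * v.2)]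

theorem finite_setOf_binaryForm_eq (hD : discrim a b c < 0) (n : ℤ) :
    {v | binaryForm a b c v = n}.Finite := by
  refine ((Set.finite_Icc (-(4 * c * n)) (4 * c * n)).prod
    (Set.finite_Icc (-(4 * a * n)) (4 * a * n))).subset fun v hv ↦ ?_
  have hv : binaryForm a b c v = n := hv
  have hswap : binaryForm c b a v.swap = n := by rw [← hv]; simp; ring
  have hD' : discrim c b a < 0 := by rwa [discrim_swap]
  exact ⟨abs_le.1 (hswap ▸ abs_snd_le_four_mul_binaryForm hD' v.swap),
    abs_le.1 (hv ▸ abs_snd_le_four_mul_binaryForm hD v)⟩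

end BinaryForms

section Roots

/-- The roots of `a t² + b t + c` in a finite commutative ring. Over a field they are the slopes
of the isotropic lines of `a x² + b x y + c y²` when `a ≠ 0`. -/
def quadraticRoots {R : Type*} [CommRing R] [Fintype R] [DecidableEq R] (a b c : R) : Finset R :=
  {t | a * (t * t) + b * t + c = 0}

variable {K : Type*} [Field K] [Fintype K] [DecidableEq K]

theorem card_quadraticRoots (hK : ringChar K ≠ 2) {a b c : K} (ha : a ≠ 0) :
    (#(quadraticRoots a b c) : ℤ) = quadraticChar K (discrim a b c) + 1 := by
  have : NeZero (2 : K) := ⟨Ring.two_ne_zero hK⟩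
  have h2a : 2 * a ≠ 0 := mul_ne_zero two_ne_zero ha
  rw [← quadraticChar_card_sqrts hK]
  congr 1
  refine card_bij' (fun t _ ↦ 2 * a * t + b) (fun s _ ↦ (s - b) / (2 * a)) ?_ ?_ ?_ ?_
  · intro t ht
    simpa [eq_comm] using (quadratic_eq_zero_iff_discrim_eq_sq ha t).1 (mem_filter.1 ht).2
  · intro s hs
    refine mem_filter.2 ⟨mem_univ _, (quadratic_eq_zero_iff_discrim_eq_sq ha _).2 ?_⟩
    rw [mul_div_cancel₀ _ h2a, sub_add_cancel]
    simpa [eq_comm] using hs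
  · intro t _
    field_simp
    ring
  · intro s _
    field_simp
    ring

theorem sum_card_filter_quadraticRoots {ι : Type*} {a b c : K} (ha : a ≠ 0) (s : Finset ι)
    (x y : ι → K) (hxy : ∀ i ∈ s, binaryForm a b c (x i, y i) = 0) :
    ∑ t ∈ quadraticRoots a b c, #{i ∈ s | x i = t * y i} =
      #{i ∈ s | y i ≠ 0} + #(quadraticRoots a b c) * #{i ∈ s | y i = 0} := by
  have hcount (i : ι) (hi : i ∈ s) : #{t ∈ quadraticRoots a b c | x i = t * y i} =
      (if y i ≠ 0 then 1 else 0) + #(quadraticRoots a b c) * if y i = 0 then 1 else 0 := by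
    have hQ := hxy i hi
    rw [binaryForm_apply] at hQ
    by_cases hy : y i = 0
    · have hx : x i = 0 := by simpa [hy, ha] using hQ
      simp [hx, hy]
    · have hslope : x i / y i ∈ quadraticRoots a b c := by
        refine mem_filter.2 ⟨mem_univ _, ?_⟩
        field_simp
        linear_combination hQ
      have hunique : {t ∈ quadraticRoots a b c | x i = t * y i} = {x i / y i} := by
        ext t
        simp only [mem_filter, mem_singleton, eq_div_iff hy, eq_comm (a := x i)]
        exact ⟨And.right, fun h ↦ ⟨eq_div_of_mul_eq hy h ▸ hslope, h⟩⟩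
      simp [hunique, hy]
  simp only [card_filter _ s]
  rw [sum_comm, mul_sum, ← sum_add_distrib]
  exact sum_congr rfl fun i hi ↦ by rw [← hcount i hi, card_filter]

end Roots

section Neighbors

/-- The form induced by `Q = a x² + b x y + c y²` on the sublattice `x ≡ t y mod p` of index `p`,
divided by `p`. It is an integral form when `p` divides `a t² + b t + c`. -/
def neighborForm (a b c : ℤ) (p : ℕ) (t : ℤ) : QuadraticForm ℤ (ℤ × ℤ) :=
  binaryForm (a * p) (2 * a * t + b) ((a * (t * t) + b * t + c) / p)

variable {a b c t : ℤ} {p : ℕ}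

theorem ncard_binaryForm_slope_eq_repCount (hp : p ≠ 0) (ht : (p : ℤ) ∣ a * (t * t) + b * t + c)
    (n : ℕ) :
    {v : ℤ × ℤ | binaryForm a b c v = (p * n : ℕ) ∧ (p : ℤ) ∣ v.1 - t * v.2}.ncard =
      repCount (neighborForm a b c p t) n := by
  let φ : ℤ × ℤ →ₗ[ℤ] ℤ × ℤ :=
    ((p : ℤ) • LinearMap.fst ℤ ℤ ℤ + t • LinearMap.snd ℤ ℤ ℤ).prod (.snd ℤ ℤ ℤ)
  have hφ : Function.Injective φ := by
    rintro ⟨z, y⟩ ⟨z', y'⟩ h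
    obtain ⟨h, rfl⟩ : p * z + t * y = p * z' + t * y' ∧ y = y' := by simpa [φ] using h
    simpa [hp] using h
  have hQ (w : ℤ × ℤ) : binaryForm a b c (φ w) = p * neighborForm a b c p t w := by
    obtain ⟨m, hm⟩ := ht
    simp only [φ, neighborForm, hm, Int.mul_ediv_cancel_left m (Int.natCast_ne_zero.2 hp),
      binaryForm_apply, LinearMap.prod_apply, LinearMap.add_apply, LinearMap.smul_apply,
      LinearMap.fst_apply, LinearMap.snd_apply, Function.prod, smul_eq_mul]
    linear_combination w.2 ^ 2 * hm
  rw [← ncard_inter_range_eq_repCount hφ hp hQ]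
  congr 1
  ext ⟨x, y⟩
  refine and_congr_right fun _ ↦ ⟨?_, ?_⟩
  · rintro ⟨z, hz⟩
    exact ⟨(z, y), by simp [φ]; linarith⟩
  · rintro ⟨⟨z, y'⟩, h⟩
    obtain ⟨hx, rfl⟩ : p * z + t * y' = x ∧ y' = y := by simpa [φ] using h
    exact ⟨z, sub_eq_of_eq_add hx.symm⟩

theorem ncard_dvd_and_dvd_eq_repCount (Q : QuadraticForm ℤ (ℤ × ℤ)) (hp : p ≠ 0) (n : ℕ) :
    {v : ℤ × ℤ | Q v = (p * n : ℕ) ∧ (p : ℤ) ∣ v.1 ∧ (p : ℤ) ∣ v.2}.ncard =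
      if p ∣ n then repCount Q (n / p) else 0 := by
  let φ : ℤ × ℤ →ₗ[ℤ] ℤ × ℤ := (p : ℤ) • .id
  have hφ : Function.Injective φ := smul_right_injective _ (Int.natCast_ne_zero.2 hp)
  have hQ (w : ℤ × ℤ) : Q (φ w) = p * ((p : ℤ) • Q) w :=
    (Q.map_smul (p : ℤ) w).trans (mul_assoc _ _ _)
  rw [← repCount_natCast_smul hp, ← ncard_inter_range_eq_repCount hφ hp hQ]
  congr 1
  ext ⟨x, y⟩
  refine and_congr_right fun _ ↦ ⟨?_, ?_⟩
  · rintro ⟨⟨x, rfl⟩, y, rfl⟩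
    exact ⟨(x, y), rfl⟩
  · rintro ⟨⟨z, w⟩, h⟩
    exact ⟨⟨z, (congr_arg Prod.fst h).symm⟩, w, (congr_arg Prod.snd h).symm⟩

theorem repCount_prime_mul [Fact p.Prime] (hD : discrim a b c < 0) (ha : (a : ZMod p) ≠ 0)
    (n : ℕ) :
    (repCount (binaryForm a b c) (p * n) : ℤ) =
      ∑ t ∈ quadraticRoots (a : ZMod p) b c, (repCount (neighborForm a b c p t.val) n : ℤ) -
        (#(quadraticRoots (a : ZMod p) b c) - 1) *
          if p ∣ n then repCount (binaryForm a b c) (n / p) else 0 := by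
  have hp : p ≠ 0 := (Fact.out : p.Prime).ne_zero
  let s := (finite_setOf_binaryForm_eq hD (p * n : ℕ)).toFinset
  have mem_s {v : ℤ × ℤ} : v ∈ s ↔ binaryForm a b c v = (p * n : ℕ) := by simp [s]
  have isotropic (v : ℤ × ℤ) (hv : v ∈ s) :
      binaryForm (a : ZMod p) b c ((v.1 : ZMod p), (v.2 : ZMod p)) = 0 := by
    simpa using congr_arg (Int.cast : ℤ → ZMod p) (mem_s.1 hv)
  have card_s : #s = repCount (binaryForm a b c) (p * n) :=
    (Set.ncard_eq_toFinset_card _ _).symm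
  have card_slope (t : ZMod p) (ht : t ∈ quadraticRoots (a : ZMod p) b c) :
      #{v ∈ s | (v.1 : ZMod p) = t * v.2} = repCount (neighborForm a b c p t.val) n := by
    have hroot : (p : ℤ) ∣ a * (t.val * t.val) + b * t.val + c := by
      rw [← ZMod.intCast_zmod_eq_zero_iff_dvd]
      simpa using (mem_filter.1 ht).2
    rw [← ncard_binaryForm_slope_eq_repCount hp hroot, ← Set.ncard_coe_finset]
    congr 1
    ext v
    simp [mem_s, ← ZMod.intCast_zmod_eq_zero_iff_dvd, sub_eq_zero]
  have card_zero : #{v ∈ s | (v.2 : ZMod p) = 0} =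
      if p ∣ n then repCount (binaryForm a b c) (n / p) else 0 := by
    rw [← ncard_dvd_and_dvd_eq_repCount _ hp, ← Set.ncard_coe_finset]
    congr 1
    ext v
    simp only [coe_filter, mem_s, Set.mem_ofPred_eq, ← ZMod.intCast_zmod_eq_zero_iff_dvd]
    refine and_congr_right fun hv ↦ ⟨fun hy ↦ ⟨?_, hy⟩, And.right⟩
    simpa [hy, ha] using isotropic v (mem_s.2 hv)
  have key := sum_card_filter_quadraticRoots ha s (fun v ↦ (v.1 : ZMod p))
    (fun v ↦ (v.2 : ZMod p)) isotropic
  have hsplit := card_filter_add_card_filter_not (s := s) fun v ↦ (v.2 : ZMod p) = 0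
  rw [sum_congr rfl card_slope, card_zero] at key
  rw [card_s, card_zero] at hsplit
  rw [← Nat.cast_sum, key, ← hsplit]
  push_cast
  ring

end Neighbors

section Reduction

theorem exists_equivalent_abs_le {a : ℤ} (ha : 0 < a) (b c : ℤ) :
    ∃ b' c' : ℤ, (binaryForm a b c).Equivalent (binaryForm a b' c') ∧
      discrim a b' c' = discrim a b c ∧ |b'| ≤ a := by
  let q := -((b + a) / (2 * a))
  refine ⟨b + 2 * a * q, c + b * q + a * q ^ 2,
    (binaryForm_equivalent_swap a b c).trans <|
      (binaryForm_equivalent_shear c b a q).trans (binaryForm_equivalent_swap _ _ _),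
    ?_, ?_⟩
  · rw [discrim, discrim]
    ring
  · have hdiv := Int.emod_add_mul_ediv (b + a) (2 * a)
    have hnonneg := Int.emod_nonneg (b + a) (b := 2 * a) (by positivity)
    have hlt := Int.emod_lt_of_pos (b + a) (b := 2 * a) (by positivity)
    simp only [abs_le, q]
    constructor <;> linarith

theorem exists_equivalent_reduced {a b c : ℤ} (ha : 0 < a) (hD : discrim a b c < 0) :
    ∃ a' b' c' : ℤ, (binaryForm a b c).Equivalent (binaryForm a' b' c') ∧
      discrim a' b' c' = discrim a b c ∧ 0 < a' ∧ |b'| ≤ a' ∧ a' ≤ c' := by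
  induction h : a.toNat using Nat.strong_induction_on generalizing a b c with
  | _ k ih =>
    obtain ⟨b', c', hequiv, hD', hb'⟩ := exists_equivalent_abs_le ha b c
    rcases le_or_gt a c' with hac | hca
    · exact ⟨a, b', c', hequiv, hD', ha, hb', hac⟩
    have hswap : discrim c' b' a = discrim a b c := (discrim_swap a b' c').trans hD'
    have hc' : 0 < c' := by
      rw [← hD', discrim] at hD
      exact pos_of_mul_pos_right (a := 4 * a) (by linarith [sq_nonneg b']) (by positivity)
    obtain ⟨A, B, C, hequiv', hD'', hred⟩ :=
      ih c'.toNat (by omega) hc' (hswap ▸ hD) rfl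
    exact ⟨A, B, C, hequiv.trans ((binaryForm_equivalent_swap _ _ _).trans hequiv'),
      hD''.trans hswap, hred⟩

theorem equivalent_of_discrim_eq_neg_fifteen {a b c : ℤ} (ha : 0 < a)
    (hD : discrim a b c = -15) :
    (binaryForm a b c).Equivalent (binaryForm 1 1 4) ∨
      (binaryForm a b c).Equivalent (binaryForm 2 1 2) := by
  obtain ⟨a', b', c', hequiv, hD', ha', hb', hc'⟩ :=
    exists_equivalent_reduced ha (hD.trans_lt (by simp))
  replace hequiv : (binaryForm a b c).Equivalent (binaryForm a' |b'| c') := by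
    rcases abs_choice b' with h | h
    · rwa [h]
    · exact h ▸ hequiv.trans (binaryForm_equivalent_neg a' b' c')
  rw [hD, discrim, ← sq_abs] at hD'
  have ha2 : a' ≤ 2 := by nlinarith [abs_nonneg b']
  have hb0 : 0 ≤ |b'| := abs_nonneg b'
  generalize |b'| = B at *
  obtain ⟨rfl, rfl, rfl⟩ | ⟨rfl, rfl, rfl⟩ :
      (a' = 1 ∧ B = 1 ∧ c' = 4) ∨ (a' = 2 ∧ B = 1 ∧ c' = 2) := by
    interval_cases a' <;> interval_cases B <;> omega
  · exact .inl hequiv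
  · exact .inr hequiv

end Reduction

section Genera

/-- The reduced form of discriminant `-15` whose values prime to `3` are congruent to `u`
modulo `3`, for `u = 1` and `u = 2`. -/
def genusForm (u : ZMod 3) : QuadraticForm ℤ (ℤ × ℤ) :=
  if u = 1 then binaryForm 1 1 4 else binaryForm 2 1 2

/-- The genus of the forms of discriminant `-15` that arise as norm forms of a prime ideal over
`p`, encoded by the residue class modulo `3` of their values prime to `3`. -/
def primeGenus (p : ℕ) : ZMod 3 :=
  if p = 3 then 2 else p

variable {a b c t : ℤ} {p : ℕ}

theorem genusForm_apply_eq_zero_or_eq (u : ZMod 3) (hu : u ≠ 0) (v : ℤ × ℤ) :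
    (genusForm u v : ZMod 3) = 0 ∨ (genusForm u v : ZMod 3) = u := by
  obtain rfl | rfl : u = 1 ∨ u = 2 := by revert u; decide
  · simp only [genusForm, if_true, binaryForm_apply]
    push_cast
    generalize (v.1 : ZMod 3) = x, (v.2 : ZMod 3) = y
    revert x y
    decide
  · rw [genusForm, if_neg (by decide), binaryForm_apply]
    push_cast
    generalize (v.1 : ZMod 3) = x, (v.2 : ZMod 3) = y
    revert x y
    decide

theorem binaryForm_equivalent_genusForm (ha : 0 < a) (hD : discrim a b c = -15) {v : ℤ × ℤ}
    (hv : (binaryForm a b c v : ZMod 3) ≠ 0) :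
    (binaryForm a b c).Equivalent (genusForm (binaryForm a b c v)) := by
  obtain ⟨u, hu, ⟨e⟩⟩ : ∃ u ≠ 0, (binaryForm a b c).Equivalent (genusForm u) := by
    rcases equivalent_of_discrim_eq_neg_fifteen ha hD with h | h
    · exact ⟨1, by decide, h⟩
    · exact ⟨2, by decide, h⟩
  have hvalue : (binaryForm a b c v : ZMod 3) = u := by
    rw [← e.map_app v] at hv ⊢
    exact (genusForm_apply_eq_zero_or_eq u hu _).resolve_left hv
  exact hvalue ▸ ⟨e⟩

theorem discrim_neighborForm (ht : (p : ℤ) ∣ a * (t * t) + b * t + c) :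
    discrim (a * p) (2 * a * t + b) ((a * (t * t) + b * t + c) / p) = discrim a b c := by
  rw [discrim, discrim]
  linear_combination -4 * a * Int.mul_ediv_cancel' ht

theorem intCast_mul_eq_two_of_discrim_eq_neg_fifteen (hD : discrim (a * 3) b c = -15) :
    (a * c : ZMod 3) = 2 := by
  obtain ⟨k, rfl⟩ : 3 ∣ b := by
    refine Int.prime_three.dvd_of_dvd_pow (n := 2) ⟨4 * a * c - 5, ?_⟩
    rw [discrim] at hD
    linarith
  rw [discrim] at hD
  have hac : 3 ∣ a * c - (2 : ℤ) := ⟨k ^ 2 - a * c + 1, by linarith⟩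
  rw [← sub_eq_zero]
  exact_mod_cast (ZMod.intCast_zmod_eq_zero_iff_dvd _ 3).2 hac

theorem primeGenus_ne_zero (hp : p.Prime) : primeGenus p ≠ 0 := by
  rw [primeGenus]
  split_ifs with hp3
  · decide
  · rwa [Ne, ZMod.natCast_eq_zero_iff, Nat.prime_dvd_prime_iff_eq Nat.prime_three hp, eq_comm]

theorem exists_neighborForm_eq_mul_primeGenus (hD : discrim a b c = -15)
    (ha3 : (a : ZMod 3) ≠ 0) (ht : (p : ℤ) ∣ a * (t * t) + b * t + c) :
    ∃ v, (neighborForm a b c p t v : ZMod 3) = a * primeGenus p := by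
  rcases eq_or_ne p 3 with rfl | hp3
  · have hac := intCast_mul_eq_two_of_discrim_eq_neg_fifteen
      ((discrim_neighborForm ht).trans hD)
    have mul_self_eq_one : ∀ x : ZMod 3, x ≠ 0 → x * x = 1 := by decide
    refine ⟨(0, 1), ?_⟩
    rw [primeGenus, if_pos rfl, ← hac, ← mul_assoc, mul_self_eq_one _ ha3]
    simp [neighborForm]
  · exact ⟨(1, 0), by simp [neighborForm, primeGenus, hp3]⟩

theorem neighborForm_equivalent_genusForm (hp : p.Prime) (ha : 0 < a) (hD : discrim a b c = -15)
    (ha3 : (a : ZMod 3) ≠ 0) (ht : (p : ℤ) ∣ a * (t * t) + b * t + c) :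
    (neighborForm a b c p t).Equivalent (genusForm (a * primeGenus p)) := by
  obtain ⟨v, hv⟩ := exists_neighborForm_eq_mul_primeGenus hD ha3 ht
  rw [← hv]
  refine binaryForm_equivalent_genusForm (mul_pos ha (Int.natCast_pos.2 hp.pos))
    ((discrim_neighborForm ht).trans hD) ?_
  exact hv ▸ mul_ne_zero ha3 (primeGenus_ne_zero hp)

end Genera

section Characters

theorem chiNeg3_eq_jacobiSym (n : ℕ) : chiNeg3 n = J(n | 3) := by
  rw [jacobiSym.mod_left, chiNeg3]
  have h : n % 3 < 3 := Nat.mod_lt _ (by decide)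
  norm_cast
  interval_cases n % 3 <;> norm_num; rfl

theorem chi5_eq_jacobiSym (n : ℕ) : chi5 n = J(n | 5) := by
  rw [jacobiSym.mod_left, chi5]
  have h : n % 5 < 5 := Nat.mod_lt _ (by decide)
  norm_cast
  interval_cases n % 5 <;> norm_num <;> rfl

theorem chiNeg15_eq_jacobiSym (n : ℕ) : chiNeg15 n = J(n | 15) := by
  rw [chiNeg15, chiNeg3_eq_jacobiSym, chi5_eq_jacobiSym, ← jacobiSym.mul_right]

theorem chiNeg3_mul (m n : ℕ) : chiNeg3 (m * n) = chiNeg3 m * chiNeg3 n := by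
  simp only [chiNeg3_eq_jacobiSym, Nat.cast_mul, jacobiSym.mul_left]

theorem chi5_mul (m n : ℕ) : chi5 (m * n) = chi5 m * chi5 n := by
  simp only [chi5_eq_jacobiSym, Nat.cast_mul, jacobiSym.mul_left]

theorem chiNeg15_mul (m n : ℕ) : chiNeg15 (m * n) = chiNeg15 m * chiNeg15 n := by
  simp only [chiNeg15_eq_jacobiSym, Nat.cast_mul, jacobiSym.mul_left]

theorem jacobiSym_neg_left_of_mod_four_eq_three {b n : ℕ} (hb : b % 4 = 3) (hn : Odd n) :
    J(-b | n) = J(n | b) := by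
  rw [jacobiSym.neg _ hn]
  rcases Nat.odd_mod_four_iff.1 (Nat.odd_iff.1 hn) with hn4 | hn4
  · rw [ZMod.χ₄_nat_one_mod_four hn4, one_mul,
      jacobiSym.quadratic_reciprocity_one_mod_four'
        (Nat.odd_iff.2 (Nat.odd_of_mod_four_eq_three hb)) hn4]
  · rw [ZMod.χ₄_nat_three_mod_four hn4, jacobiSym.quadratic_reciprocity_three_mod_four hb hn4]
    ring

theorem intCast_zmod_two_of_discrim_eq_neg_fifteen {a b c : ℤ} (hD : discrim a b c = -15)
    (ha : (a : ZMod 2) ≠ 0) : (a : ZMod 2) = 1 ∧ (b : ZMod 2) = 1 ∧ (c : ZMod 2) = 0 := by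
  have ha1 : (a : ZMod 2) = 1 := Fin.eq_one_of_ne_zero _ ha
  rw [discrim] at hD
  obtain ⟨k, rfl⟩ : Odd b := by
    have hodd : Odd (b ^ 2) := ⟨2 * a * c - 8, by linarith⟩
    exact (Int.odd_pow.1 hodd).resolve_right two_ne_zero
  have hac : a * c = k * (k + 1) + 2 * 2 := by linarith
  refine ⟨ha1, ?_, ?_⟩
  · simp [show (2 : ZMod 2) = 0 from rfl]
  · have heven : Even (a * c) := hac ▸ (Int.even_mul_succ_self k).add (even_two_mul 2)
    simpa [ha1] using (ZMod.intCast_eq_zero_iff_even).2 heven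

theorem card_quadraticRoots_one_one_zero : #(quadraticRoots (1 : ZMod 2) 1 0) = 2 := by
  decide

theorem card_quadraticRoots_eq_one_add_chiNeg15 {a b c : ℤ} {p : ℕ} [Fact p.Prime]
    (hD : discrim a b c = -15) (ha : (a : ZMod p) ≠ 0) :
    (#(quadraticRoots (a : ZMod p) b c) : ℤ) = 1 + chiNeg15 p := by
  have hp : p.Prime := Fact.out
  rcases hp.eq_two_or_odd' with rfl | hodd
  · obtain ⟨ha1, hb1, hc0⟩ := intCast_zmod_two_of_discrim_eq_neg_fifteen hD ha
    rw [ha1, hb1, hc0]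
    exact congr_arg Nat.cast card_quadraticRoots_one_one_zero
  · have hring : ringChar (ZMod p) ≠ 2 := by
      rw [ZMod.ringChar_zmod_n]
      rintro rfl
      exact absurd hodd (by decide)
    have hdiscrim : discrim (a : ZMod p) b c = (-(15 : ℕ) : ℤ) := by
      simpa [discrim] using congr_arg (Int.cast : ℤ → ZMod p) hD
    rw [card_quadraticRoots hring ha, hdiscrim, chiNeg15_eq_jacobiSym,
      ← jacobiSym_neg_left_of_mod_four_eq_three rfl hodd, ← jacobiSym.legendreSym.to_jacobiSym,
      add_comm, legendreSym]

end Characters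

section GenusRecursions

variable {p : ℕ}

theorem exists_discrim_eq_neg_fifteen_of_genus {u : ZMod 3} (hu : u ≠ 0) (hp : p.Prime) :
    ∃ a b c : ℤ, 0 < a ∧ discrim a b c = -15 ∧ (a : ZMod p) ≠ 0 ∧ (a : ZMod 3) = u := by
  obtain rfl | rfl : u = 1 ∨ u = 2 := by decide +revert
  · have : Nontrivial (ZMod p) := ZMod.nontrivial_iff.2 hp.ne_one
    exact ⟨1, 1, 4, by simp, by simp [discrim], by simp, by simp⟩
  rcases eq_or_ne p 2 with rfl | hp2
  · exact ⟨5, 5, 2, by simp, by simp [discrim], by decide, by decide⟩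
  · refine ⟨2, 1, 2, by simp, by simp [discrim], ?_, by simp⟩
    rwa [← Nat.cast_ofNat, Int.cast_natCast, Ne, ZMod.natCast_eq_zero_iff,
      Nat.prime_dvd_prime_iff_eq hp Nat.prime_two]

theorem repCount_genusForm_prime_mul {u : ZMod 3} (hu : u ≠ 0) (hp : p.Prime) (n : ℕ) :
    (repCount (genusForm u) (p * n) : ℤ) =
      (1 + chiNeg15 p) * repCount (genusForm (u * primeGenus p)) n -
        chiNeg15 p * if p ∣ n then repCount (genusForm u) (n / p) else 0 := by
  have : Fact p.Prime := ⟨hp⟩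
  obtain ⟨a, b, c, ha, hD, hap, rfl⟩ := exists_discrim_eq_neg_fifteen_of_genus hu hp
  have hgenus : (binaryForm a b c).Equivalent (genusForm a) := by
    simpa [hu] using binaryForm_equivalent_genusForm ha hD (v := (1, 0))
  have hneighbor (t : ZMod p) (ht : t ∈ quadraticRoots (a : ZMod p) b c) :
      (repCount (neighborForm a b c p t.val) n : ℤ) =
        repCount (genusForm (a * primeGenus p)) n := by
    rw [repCount_congr (neighborForm_equivalent_genusForm hp ha hD hu ?_)]
    rw [← ZMod.intCast_zmod_eq_zero_iff_dvd]
    simpa using (mem_filter.1 ht).2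
  rw [← repCount_congr hgenus, repCount_prime_mul (hD.trans_lt (by simp)) hap,
    sum_congr rfl hneighbor, sum_const, nsmul_eq_mul,
    card_quadraticRoots_eq_one_add_chiNeg15 hD hap, add_sub_cancel_left]

theorem primeGenus_eq_one_or_eq_two (hp : p.Prime) :
    (primeGenus p = 1 ∧ chiNeg3 p + chi5 p = 1 + chiNeg15 p) ∨
      (primeGenus p = 2 ∧ chiNeg3 p + chi5 p = -(1 + chiNeg15 p)) := by
  rcases eq_or_ne p 3 with rfl | hp3
  · decide
  have hp3' : p % 3 ≠ 0 := fun h ↦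
    hp3 ((Nat.prime_dvd_prime_iff_eq Nat.prime_three hp).1 (Nat.dvd_of_mod_eq_zero h)).symm
  rw [primeGenus, if_neg hp3, ← ZMod.natCast_mod, chiNeg15, chiNeg3]
  obtain h | h : p % 3 = 1 ∨ p % 3 = 2 := by lia
  · exact .inl (by simp [h])
  · exact .inr (by simp [h]; ring)

theorem heckeRecursion_repCount_add_mul {ε : ℤ} (hε : ε * ε = 1) {a : ℕ → ℤ}
    (ha : ∀ p : ℕ, p.Prime → (primeGenus p = 1 ∧ a p = 1 + chiNeg15 p) ∨
      (primeGenus p = 2 ∧ a p = ε * (1 + chiNeg15 p))) :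
    HeckeRecursion a chiNeg15 fun n ↦ repCount (genusForm 1) n + ε * repCount (genusForm 2) n := by
  intro p n hp _
  have h1 := repCount_genusForm_prime_mul one_ne_zero hp n
  have h2 := repCount_genusForm_prime_mul (u := 2) (by decide) hp n
  rw [one_mul] at h1
  rcases ha p hp with ⟨hg, hap⟩ | ⟨hg, hap⟩ <;> rw [hg] at h1 h2
  · rw [mul_one] at h2
    simp only [h1, h2, hap]
    split_ifs <;> ring
  · rw [show (2 * 2 : ZMod 3) = 1 from rfl] at h2
    simp only [h1, h2, hap]
    split_ifs <;> linear_combination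
      -(1 + chiNeg15 p) * (repCount (genusForm 2) n : ℤ) * hε

theorem repCount_genusForm_one_one : repCount (genusForm 1) 1 = 2 := by
  have hset : {v | genusForm 1 v = (1 : ℕ)} = {(1, 0), (-1, 0)} := by
    ext ⟨x, y⟩
    simp only [genusForm, if_true, binaryForm_apply, Set.mem_ofPred_eq, Set.mem_insert_iff,
      Set.mem_singleton_iff, Prod.mk.injEq]
    constructor
    · intro h
      obtain rfl : y = 0 := by
        rw [← sq_eq_zero_iff]
        push_cast at h
        linarith [sq_nonneg (2 * x + y), sq_nonneg y]
      simpa using h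
    · rintro (⟨rfl, rfl⟩ | ⟨rfl, rfl⟩) <;> norm_num
  rw [repCount, hset, Set.ncard_pair (by simp)]

theorem repCount_genusForm_two_one : repCount (genusForm 2) 1 = 0 := by
  refine repCount_eq_zero fun v hv ↦ ?_
  have hvalue := genusForm_apply_eq_zero_or_eq 2 (by decide) v
  rw [hv] at hvalue
  revert hvalue
  decide

theorem repCount_genusForm_one_add {n : ℕ} (hn : n ≠ 0) :
    (repCount (genusForm 1) n + repCount (genusForm 2) n : ℤ) =
      2 * ((1 : ℕ → ℤ) ⍟ chiNeg15) n := by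
  have hrec : HeckeRecursion (fun p ↦ 1 + chiNeg15 p) chiNeg15 ((1 : ℕ → ℤ) ⍟ chiNeg15) := by
    simpa only [Pi.one_apply, one_mul] using
      heckeRecursion_convolution (f := 1) (by simp) chiNeg15_mul
  have hcomm := (heckeRecursion_repCount_add_mul (one_mul 1) fun p hp ↦
    (primeGenus_eq_one_or_eq_two hp).imp (.imp_right fun _ ↦ rfl)
      (.imp_right fun _ ↦ (one_mul _).symm)).mul_apply_one_comm hrec hn
  rw [repCount_genusForm_one_one, repCount_genusForm_two_one, convolution_apply_one,
    show (1 : ℕ → ℤ) 1 * chiNeg15 1 = 1 from rfl] at hcomm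
  push_cast at hcomm
  linarith

theorem repCount_genusForm_one_sub {n : ℕ} (hn : n ≠ 0) :
    (repCount (genusForm 1) n - repCount (genusForm 2) n : ℤ) = 2 * (chiNeg3 ⍟ chi5) n := by
  have hrec : HeckeRecursion (fun p ↦ chiNeg3 p + chi5 p) chiNeg15 (chiNeg3 ⍟ chi5) :=
    heckeRecursion_convolution chiNeg3_mul chi5_mul
  have hcomm := (heckeRecursion_repCount_add_mul (neg_mul_neg 1 1) fun p hp ↦
    (primeGenus_eq_one_or_eq_two hp).imp id
      (.imp_right fun h ↦ h.trans (neg_one_mul _).symm)).mul_apply_one_comm hrec hn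
  rw [repCount_genusForm_one_one, repCount_genusForm_two_one, convolution_apply_one,
    show chiNeg3 1 * chi5 1 = 1 from rfl] at hcomm
  push_cast at hcomm
  linarith

theorem repCount_genusForm_one_eq {n : ℕ} (hn : n ≠ 0) :
    (repCount (genusForm 1) n : ℤ) =
      ((1 : ℕ → ℤ) ⍟ chiNeg15) n + (chiNeg3 ⍟ chi5) n := by
  linarith [repCount_genusForm_one_add hn, repCount_genusForm_one_sub hn]

end GenusRecursions

section DirichletSeries

theorem tsum_one_div_natCast_cpow_eq_LSeries {ι : Type*} {N : ι → ℕ} (hN : ∀ x, N x ≠ 0)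
    (hfin : ∀ n, (N ⁻¹' {n}).Finite) {s : ℂ}
    (hs : LSeriesSummable (fun n ↦ ((N ⁻¹' {n}).ncard : ℂ)) s) :
    ∑' x, 1 / (N x : ℂ) ^ s = LSeries (fun n ↦ ((N ⁻¹' {n}).ncard : ℂ)) s := by
  have hterm (n : ℕ) : LSeries.term (fun n ↦ ((N ⁻¹' {n}).ncard : ℂ)) s n =
      (N ⁻¹' {n}).ncard * (1 / (n : ℂ) ^ s) := by
    rcases eq_or_ne n 0 with rfl | hn
    · have hempty : N ⁻¹' {0} = ∅ := Set.eq_empty_of_forall_notMem hN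
      simp [hempty]
    · rw [LSeries.term_of_ne_zero hn, mul_one_div]
  have hfiber {E : Type} [NormedAddCommGroup E] [CompleteSpace E] (g : ℕ → E) (n : ℕ) :
      ∑' x : N ⁻¹' {n}, g (N x) = (N ⁻¹' {n}).ncard • g n := by
    rw [← Nat.card_coe_set_eq, ← tsum_const]
    exact tsum_congr fun x ↦ congr_arg g x.2
  have hsum : Summable fun x ↦ 1 / (N x : ℂ) ^ s := by
    refine .of_norm ((summable_partition (fun _ ↦ norm_nonneg _)
      (s := fun n ↦ N ⁻¹' {n}) fun x ↦ ⟨N x, rfl, fun _ h ↦ h.symm⟩).2 ⟨fun n ↦ ?_, ?_⟩)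
    · have := (hfin n).to_subtype
      exact .of_finite
    · refine hs.norm.congr fun n ↦ ?_
      rw [hfiber fun n ↦ ‖1 / (n : ℂ) ^ s‖, hterm, norm_mul, Complex.norm_natCast, nsmul_eq_mul]
  rw [← (hsum.hasSum.tsum_fiberwise N).tsum_eq, LSeries]
  exact tsum_congr fun n ↦ by rw [hfiber fun n ↦ 1 / (n : ℂ) ^ s, hterm, nsmul_eq_mul]

theorem tsum_one_div_cpow_eq_LSeries_repCount {M : Type*} [AddCommGroup M]
    {Q : QuadraticForm ℤ M} (hQ : Q.PosDef) (hfin : ∀ n : ℕ, {v | Q v = n}.Finite) {s : ℂ}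
    (hs : LSeriesSummable (fun n ↦ (repCount Q n : ℂ)) s) :
    ∑' v : {v : M // v ≠ 0}, 1 / (Q v : ℂ) ^ s = LSeries (fun n ↦ (repCount Q n : ℂ)) s := by
  let N (v : {v : M // v ≠ 0}) : ℕ := (Q v).toNat
  have hN (v : {v : M // v ≠ 0}) : (N v : ℤ) = Q v := Int.toNat_of_nonneg (hQ v.1 v.2).le
  have hN0 (v : {v : M // v ≠ 0}) : N v ≠ 0 := by
    have := hN v ▸ hQ v.1 v.2
    omega
  have hfiber (n : ℕ) : N ⁻¹' {n} = Subtype.val ⁻¹' {v | Q v = n} := by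
    ext v
    simp [← hN]
  have hcard {n : ℕ} (hn : n ≠ 0) : (repCount Q n : ℂ) = (N ⁻¹' {n}).ncard := by
    rw [hfiber, Set.ncard_preimage_of_injective_subset_range Subtype.val_injective, repCount]
    rintro v (hv : Q v = n)
    refine ⟨⟨v, ?_⟩, rfl⟩
    rintro rfl
    exact hn (Nat.cast_eq_zero.1 (hv.symm.trans (map_zero Q)))
  rw [LSeries_congr hcard, ← tsum_one_div_natCast_cpow_eq_LSeries hN0
    (fun n ↦ hfiber n ▸ (hfin n).preimage Subtype.val_injective.injOn)
    ((LSeriesSummable_congr s hcard).1 hs)]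
  exact tsum_congr fun v ↦ by rw [← hN, Int.cast_natCast]

theorem LSeriesSummable_jacobiSym (b : ℕ) {s : ℂ} (hs : 1 < s.re) :
    LSeriesSummable (fun n ↦ (J(n | b) : ℂ)) s := by
  refine LSeriesSummable_of_bounded_of_one_lt_re (m := 1) (fun n _ ↦ ?_) hs
  rcases jacobiSym.trichotomy n b with h | h | h <;> simp [h]

theorem LSeriesHasSum_LSer {χ : ℕ → ℤ} {b : ℕ} (hχ : ∀ n, χ n = J(n | b)) {s : ℂ}
    (hs : 1 < s.re) : LSeriesHasSum (fun n ↦ (χ n : ℂ)) s (LSer χ s) := by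
  have h : LSeriesSummable (fun n ↦ (χ n : ℂ)) s := by
    simpa only [hχ] using LSeriesSummable_jacobiSym b hs
  refine LSeriesHasSum_iff.2 ⟨h, ?_⟩
  rw [LSer, LSeries, Summable.tsum_eq_zero_add h]
  simp [LSeries.term]

theorem LSeriesHasSum_repCount_genusForm_one {s : ℂ} (hs : 1 < s.re) :
    LSeriesHasSum (fun n ↦ (repCount (genusForm 1) n : ℂ)) s
      (riemannZeta s * LSer chiNeg15 s + LSer chiNeg3 s * LSer chi5 s) := by
  have hrep {n : ℕ} (hn : n ≠ 0) : (repCount (genusForm 1) n : ℂ) =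
      ((1 ⍟ fun n ↦ (chiNeg15 n : ℂ)) + (fun n ↦ (chiNeg3 n : ℂ)) ⍟ fun n ↦ (chi5 n : ℂ)) n := by
    simpa [LSeries.convolution_def] using
      congr_arg (Int.cast : ℤ → ℂ) (repCount_genusForm_one_eq hn)
  exact (LSeriesHasSum_congr s _ hrep).2 <|
    ((LSeriesHasSum_one hs).convolution (LSeriesHasSum_LSer chiNeg15_eq_jacobiSym hs)).add
      ((LSeriesHasSum_LSer chiNeg3_eq_jacobiSym hs).convolution
        (LSeriesHasSum_LSer chi5_eq_jacobiSym hs))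

end DirichletSeries

/-- Zucker–Robertson: for `Re(s) > 1`,
`Q(1,1,4; s) = ζ(s) L(χ₋₁₅, s) + L(χ₋₃, s) L(χ₅, s)`. -/
theorem Q114_eq (s : ℂ) (hs : 1 < s.re) :
    (∑' p : {p : ℤ × ℤ // p ≠ 0},
        1 / (((p.1.1 : ℂ) ^ 2 + (p.1.1 : ℂ) * (p.1.2 : ℂ) + 4 * (p.1.2 : ℂ) ^ 2) ^ s)) =
      riemannZeta s * LSer chiNeg15 s + LSer chiNeg3 s * LSer chi5 s := by
  have hsum : LSeriesHasSum (fun n ↦ (repCount (binaryForm 1 1 4) n : ℂ)) s _ :=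
    LSeriesHasSum_repCount_genusForm_one hs
  have hD : discrim (1 : ℤ) 1 4 < 0 := by simp [discrim]
  rw [← hsum.LSeries_eq, ← tsum_one_div_cpow_eq_LSeries_repCount (binaryForm_posDef one_pos hD)
    (fun n ↦ finite_setOf_binaryForm_eq hD n) hsum.LSeriesSummable]
  simp
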